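/- Continuity of the Petz–Rényi divergence in α (lower bound): Let ρ, σ be states on ℂ^d and γ ∈ (0,1], and suppose D(ρ‖σ) < ∞ and c_γ(ρ‖σ) < ∞. Then for all δ with 0 < δ ≤ log(3)/(2·c_γ(ρ‖σ)), D_{1−δ}(ρ‖σ) ≥ D(ρ‖σ) − δ · c_γ(ρ‖σ)². -/

import Mathlib

open scoped Kronecker ComplexOrder

noncomputable section

namespace QCD

attribute [local instance] Classical.propDecidable

variable {n m : Type} [Fintype n] [DecidableEq n] [Fintype m] [DecidableEq m]

/-- The real part of the trace of a complex matrix. -/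
def rtr (A : Matrix n n ℂ) : ℝ := (A.trace).re

/-- A quantum state: positive semidefinite with trace one. -/
def IsState (ρ : Matrix n n ℂ) : Prop := ρ.PosSemidef ∧ ρ.trace = 1

/-- Loewner order: `A ≤ B` iff `B - A` is positive semidefinite. -/
def loewnerLE (A B : Matrix n n ℂ) : Prop := (B - A).PosSemidef

/-- Support containment (for PSD matrices): `ker σ ⊆ ker ρ`. -/
def SuppLE (ρ σ : Matrix n n ℂ) : Prop := ∀ v : n → ℂ, σ.mulVec v = 0 → ρ.mulVec v = 0

/-- Functional calculus for Hermitian matrices (junk value `0` otherwise). -/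
def matFun (f : ℝ → ℝ) (A : Matrix n n ℂ) : Matrix n n ℂ :=
  if hA : A.IsHermitian then
    (hA.eigenvectorUnitary : Matrix n n ℂ) *
      Matrix.diagonal (fun i => (f (hA.eigenvalues i) : ℂ)) *
      (star (hA.eigenvectorUnitary : Matrix n n ℂ))
  else 0

/-- Matrix square root via functional calculus. -/
def msqrt (A : Matrix n n ℂ) : Matrix n n ℂ := matFun Real.sqrt A

/-- Matrix real power taken on the support (`0 ^ t := 0`). -/
def mpow (A : Matrix n n ℂ) (t : ℝ) : Matrix n n ℂ :=
  matFun (fun x => if x = 0 then 0 else x ^ t) A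

/-- Matrix base-2 logarithm on the support. -/
def mlog (A : Matrix n n ℂ) : Matrix n n ℂ := matFun (Real.logb 2) A

/-- Positive part of a Hermitian matrix. -/
def mposPart (A : Matrix n n ℂ) : Matrix n n ℂ := matFun (fun x => max x 0) A

/-- Trace norm. -/
def traceNorm (A : Matrix n m ℂ) : ℝ := rtr (msqrt (A.conjTranspose * A))

/-- Base-2 logarithm as an extended real (`⊥` on nonpositive input). -/
def elog (x : ℝ) : EReal := if x ≤ 0 then ⊥ else ((Real.logb 2 x : ℝ) : EReal)

/-- Base-2 logarithm of an extended real. -/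
def elogE (x : EReal) : EReal := if x = ⊤ then ⊤ else elog x.toReal

/-- `2 ^ x` for an extended real `x`. -/
def epow2 (x : EReal) : EReal :=
  if x = ⊤ then ⊤ else if x = ⊥ then 0 else ((((2:ℝ) ^ x.toReal : ℝ)) : EReal)

/-- Umegaki relative entropy (base 2), `⊤` if the support condition fails. -/
def relEntropy (ρ σ : Matrix n n ℂ) : EReal :=
  if SuppLE ρ σ then ((rtr (ρ * (mlog ρ - mlog σ)) : ℝ) : EReal) else ⊤

/-- Petz–Rényi divergence (base 2). -/
def petzRenyi (α : ℝ) (ρ σ : Matrix n n ℂ) : EReal :=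
  if 1 < α ∧ ¬ SuppLE ρ σ then ⊤
  else (((α - 1)⁻¹ : ℝ) : EReal) * elog (rtr (mpow ρ α * mpow σ (1 - α)))

/-- Geometric (maximal) Rényi divergence (base 2). -/
def geomRenyi (α : ℝ) (ρ σ : Matrix n n ℂ) : EReal :=
  if SuppLE ρ σ then
    (((α - 1)⁻¹ : ℝ) : EReal) *
      elog (rtr (σ * mpow (mpow σ (-(1/2 : ℝ)) * ρ * mpow σ (-(1/2 : ℝ))) α))
  else ⊤

/-- Max-relative entropy (base 2). -/
def dMax (ρ σ : Matrix n n ℂ) : EReal :=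
  sInf {x : EReal | ∃ lam : ℝ, x = (lam : EReal) ∧ loewnerLE ρ ((((2:ℝ) ^ lam : ℝ) : ℂ) • σ)}

/-- Uhlmann fidelity. -/
def fidelity (ρ σ : Matrix n n ℂ) : ℝ := (rtr (msqrt (msqrt σ * ρ * msqrt σ))) ^ 2

/-- Sine (purified) distance. -/
def sineDist (ρ σ : Matrix n n ℂ) : ℝ := Real.sqrt (1 - fidelity ρ σ)

/-- Smoothed max-relative entropy: smoothing over states in the sine-distance ball. -/
def dMaxSmooth (δ : ℝ) (ρ σ : Matrix n n ℂ) : EReal :=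
  ⨅ (ρ' : Matrix n n ℂ) (_ : IsState ρ' ∧ sineDist ρ ρ' ≤ δ), dMax ρ' σ

/-- Hypothesis testing divergence (base 2). -/
def dH (ε : ℝ) (ρ σ : Matrix n n ℂ) : EReal :=
  - elog (sInf {x : ℝ | ∃ T : Matrix n n ℂ,
      T.PosSemidef ∧ ((1 : Matrix n n ℂ) - T).PosSemidef ∧ 1 - ε ≤ rtr (T * ρ) ∧ x = rtr (T * σ)})

/-- The quantity `c_γ(ρ‖σ)`. -/
def cGamma (γ : ℝ) (ρ σ : Matrix n n ℂ) : EReal :=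
  ((γ⁻¹ : ℝ) : EReal) *
    elogE (epow2 ((γ : ℝ) * petzRenyi (1 + γ) ρ σ) +
           epow2 (((-γ : ℝ) : EReal) * petzRenyi (1 - γ) ρ σ) + 1)

/-- Binary entropy (base 2). -/
def binEnt (x : ℝ) : ℝ := -(x * Real.logb 2 x) - (1 - x) * Real.logb 2 (1 - x)

/-- Action of `id_k ⊗ Φ` on block matrices. -/
def blockApply {k : Type} (Φ : Matrix n n ℂ →ₗ[ℂ] Matrix m m ℂ)
    (M : Matrix (k × n) (k × n) ℂ) : Matrix (k × m) (k × m) ℂ :=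
  Matrix.of fun p q => Φ (Matrix.of fun a b => M (p.1, a) (q.1, b)) p.2 q.2

/-- Action of `Φ ⊗ id_k` on block matrices. -/
def blockApplyRight {k : Type} (Φ : Matrix n n ℂ →ₗ[ℂ] Matrix m m ℂ)
    (M : Matrix (n × k) (n × k) ℂ) : Matrix (m × k) (m × k) ℂ :=
  Matrix.of fun p q => Φ (Matrix.of fun a b => M (a, p.2) (b, q.2)) p.1 q.1

/-- Quantum channel: trace preserving and completely positive. -/
def IsQChannel (Φ : Matrix n n ℂ →ₗ[ℂ] Matrix m m ℂ) : Prop :=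
  (∀ M : Matrix n n ℂ, (Φ M).trace = M.trace) ∧
  (∀ k : ℕ, 1 ≤ k → ∀ M : Matrix (Fin k × n) (Fin k × n) ℂ, M.PosSemidef →
    (blockApply Φ M).PosSemidef)

/-- `id_k ⊗ Φ` as a linear map. -/
def blockApplyL (k : Type) (Φ : Matrix n n ℂ →ₗ[ℂ] Matrix m m ℂ) :
    Matrix (k × n) (k × n) ℂ →ₗ[ℂ] Matrix (k × m) (k × m) ℂ where
  toFun := blockApply Φ
  map_add' M N := by
    ext p q
    show Φ (Matrix.of fun a b => (M + N) (p.1, a) (q.1, b)) p.2 q.2 = _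
    have h : (Matrix.of fun a b => (M + N) (p.1, a) (q.1, b)) =
        (Matrix.of fun a b => M (p.1, a) (q.1, b)) +
          (Matrix.of fun a b => N (p.1, a) (q.1, b)) := rfl
    rw [h, map_add]
    rfl
  map_smul' c M := by
    ext p q
    show Φ (Matrix.of fun a b => (c • M) (p.1, a) (q.1, b)) p.2 q.2 = _
    have h : (Matrix.of fun a b => (c • M) (p.1, a) (q.1, b)) =
        c • (Matrix.of fun a b => M (p.1, a) (q.1, b)) := rfl
    rw [h, map_smul]
    rfl

/-- `Φ ⊗ id_k` as a linear map. -/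
def blockApplyRightL (k : Type) (Φ : Matrix n n ℂ →ₗ[ℂ] Matrix m m ℂ) :
    Matrix (n × k) (n × k) ℂ →ₗ[ℂ] Matrix (m × k) (m × k) ℂ where
  toFun := blockApplyRight Φ
  map_add' M N := by
    ext p q
    show Φ (Matrix.of fun a b => (M + N) (a, p.2) (b, q.2)) p.1 q.1 = _
    have h : (Matrix.of fun a b => (M + N) (a, p.2) (b, q.2)) =
        (Matrix.of fun a b => M (a, p.2) (b, q.2)) +
          (Matrix.of fun a b => N (a, p.2) (b, q.2)) := rfl
    rw [h, map_add]
    rfl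
  map_smul' c M := by
    ext p q
    show Φ (Matrix.of fun a b => (c • M) (a, p.2) (b, q.2)) p.1 q.1 = _
    have h : (Matrix.of fun a b => (c • M) (a, p.2) (b, q.2)) =
        c • (Matrix.of fun a b => M (a, p.2) (b, q.2)) := rfl
    rw [h, map_smul]
    rfl

/-- Tensor product of two channels (Kronecker product action). -/
def tensorChannel {n₁ m₁ n₂ m₂ : Type}
    (E₁ : Matrix n₁ n₁ ℂ →ₗ[ℂ] Matrix m₁ m₁ ℂ) (E₂ : Matrix n₂ n₂ ℂ →ₗ[ℂ] Matrix m₂ m₂ ℂ) :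
    Matrix (n₁ × n₂) (n₁ × n₂) ℂ →ₗ[ℂ] Matrix (m₁ × m₂) (m₁ × m₂) ℂ :=
  (blockApplyRightL m₂ E₁).comp (blockApplyL n₁ E₂)

/-- Index type for `k`-fold tensor powers. -/
def tpow (ι : Type) : ℕ → Type
  | 0 => PUnit
  | (k+1) => tpow ι k × ι

def tpowFintype (ι : Type) [Fintype ι] : ∀ k : ℕ, Fintype (tpow ι k)
  | 0 => inferInstanceAs (Fintype PUnit)
  | (k+1) => letI := tpowFintype ι k; inferInstanceAs (Fintype (tpow ι k × ι))

instance (ι : Type) [Fintype ι] (k : ℕ) : Fintype (tpow ι k) := tpowFintype ι k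

def tpowDecEq (ι : Type) [DecidableEq ι] : ∀ k : ℕ, DecidableEq (tpow ι k)
  | 0 => inferInstanceAs (DecidableEq PUnit)
  | (k+1) => letI := tpowDecEq ι k; inferInstanceAs (DecidableEq (tpow ι k × ι))

instance (ι : Type) [DecidableEq ι] (k : ℕ) : DecidableEq (tpow ι k) := tpowDecEq ι k

/-- `k`-fold Kronecker tensor power of a matrix. -/
def tpowMat (ρ : Matrix n n ℂ) : ∀ k : ℕ, Matrix (tpow n k) (tpow n k) ℂ
  | 0 => 1
  | (k+1) => (tpowMat ρ k) ⊗ₖ ρ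

/-- `k`-fold tensor power of a channel. -/
def tpowChannel (Φ : Matrix n n ℂ →ₗ[ℂ] Matrix m m ℂ) :
    ∀ k : ℕ, Matrix (tpow n k) (tpow n k) ℂ →ₗ[ℂ] Matrix (tpow m k) (tpow m k) ℂ
  | 0 => LinearMap.id
  | (k+1) => tensorChannel (tpowChannel Φ k) Φ

/-- Channel divergence induced by a divergence `𝔇` on states:
sup over `k ≥ 1` and input states `ν` on `ℂ^k ⊗ ℂ^d`. -/
def chDiv (𝔇 : ∀ (p : Type) [Fintype p] [DecidableEq p], Matrix p p ℂ → Matrix p p ℂ → EReal)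
    (E F : Matrix n n ℂ →ₗ[ℂ] Matrix m m ℂ) : EReal :=
  ⨆ (k : ℕ) (_ : 1 ≤ k) (ν : Matrix (Fin k × n) (Fin k × n) ℂ) (_ : IsState ν),
    𝔇 (Fin k × m) (blockApply E ν) (blockApply F ν)

/-- The geometric Rényi divergence as a divergence family. -/
def geomD (α : ℝ) : ∀ (p : Type) [Fintype p] [DecidableEq p],
    Matrix p p ℂ → Matrix p p ℂ → EReal :=
  fun _ _ _ => geomRenyi α

/-- The Umegaki relative entropy as a divergence family. -/
def relD : ∀ (p : Type) [Fintype p] [DecidableEq p],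
    Matrix p p ℂ → Matrix p p ℂ → EReal :=
  fun _ _ _ => relEntropy

/-- The hypothesis testing divergence as a divergence family. -/
def dHD (ε : ℝ) : ∀ (p : Type) [Fintype p] [DecidableEq p],
    Matrix p p ℂ → Matrix p p ℂ → EReal :=
  fun _ _ _ => dH ε

/-- Regularized channel relative entropy. -/
def regRelEntropy (E F : Matrix n n ℂ →ₗ[ℂ] Matrix m m ℂ) : EReal :=
  ⨆ (k : ℕ) (_ : 1 ≤ k),
    (((k : ℝ)⁻¹ : ℝ) : EReal) * chDiv relD (tpowChannel E k) (tpowChannel F k)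

end QCD

/-!
In terms of the Nussbaum–Szkoła distributions of `ρ` and `σ`, the quantities `D`, `s * D_{1+s}` and
`c_γ` are, up to factors `log 2`, the mean, the cumulant generating function at `s` and
`log (𝔼[exp (γ X)] + 𝔼[exp (-γ X)] + 1) / γ` for a single real random variable `X`, the
log-likelihood ratio. The claim becomes a second-order bound for `cgf X μ t` at `t = -δ`.

Since `exp y ≤ y - 1 + 2 cosh y`, the remainder is controlled by `2 cosh (t X)`, and with
`Z = 2 cosh (γ X) + 1 ≥ 3` and `b = |t| / γ` one has `2 cosh (t X) ≤ Z ^ b + Z ^ (-b)`. For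
`b ≤ 1 / 2` the function `z ↦ z ^ b + z ^ (-b)` is concave on `[3, ∞)`, so Jensen's inequality
replaces `Z` by its mean `exp (γ C)`, where `C` is `c_γ` in natural units. This gives
`2 cosh (t C)`, and `2 cosh y - 2 ≤ y² / log 2` for `|y| ≤ log 3 / 2`.
-/

namespace QCD

section TwoSidedCgf

open Real MeasureTheory ProbabilityTheory

-- The power series of `artanh x / x` has nonnegative coefficients.
lemma mul_log_one_add_sub_log_one_sub_le {b r : ℝ} (hb : 0 ≤ b) (hbr : b ≤ r) (hr : r < 1) :
    r * (log (1 + b) - log (1 - b)) ≤ b * (log (1 + r) - log (1 - r)) := by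
  have series_b := (hasSum_log_sub_log_of_abs_lt_one
    (abs_lt.2 ⟨by linarith, by linarith⟩ : |b| < 1)).mul_left r
  have series_r := (hasSum_log_sub_log_of_abs_lt_one
    (abs_lt.2 ⟨by linarith, by linarith⟩ : |r| < 1)).mul_left b
  refine hasSum_le (fun k ↦ ?_) series_b series_r
  have hpow : b ^ (2 * k) ≤ r ^ (2 * k) := by gcongr
  calc r * (2 * (1 / (2 * k + 1)) * b ^ (2 * k + 1))
      = 2 * (1 / (2 * k + 1)) * (r * b) * b ^ (2 * k) := by ring
    _ ≤ 2 * (1 / (2 * k + 1)) * (r * b) * r ^ (2 * k) := by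
        have : 0 ≤ r := hb.trans hbr
        gcongr
    _ = b * (2 * (1 / (2 * k + 1)) * r ^ (2 * k + 1)) := by ring

lemma one_add_le_one_sub_mul_three_rpow {b : ℝ} (hb : 0 ≤ b) (hb' : b ≤ 1 / 2) :
    1 + b ≤ (1 - b) * 3 ^ (2 * b) := by
  have hpow : (0 : ℝ) < 3 ^ (2 * b) := by positivity
  have hlog := mul_log_one_add_sub_log_one_sub_le hb hb' (by norm_num)
  rw [← log_div (x := 1 + 1 / 2) (by norm_num) (by norm_num),
    show (1 + 1 / 2 : ℝ) / (1 - 1 / 2) = 3 by norm_num] at hlog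
  rw [← log_le_log_iff (by linarith) (mul_pos (by linarith) hpow),
    log_mul (by linarith) hpow.ne', log_rpow (by norm_num)]
  linarith

lemma concaveOn_rpow_add_rpow_neg {a b : ℝ} (ha : 0 < a) (hb : 0 ≤ b)
    (hab : 1 + b ≤ (1 - b) * a ^ (2 * b)) :
    ConcaveOn ℝ (Set.Ici a) fun z : ℝ ↦ z ^ b + z ^ (-b) := by
  have hderiv (c : ℝ) {x : ℝ} (hx : a ≤ x) : HasDerivAt (fun z : ℝ ↦ z ^ c) (c * x ^ (c - 1)) x :=
    hasDerivAt_rpow_const (.inl (ha.trans_le hx).ne')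
  have hb1 : 0 ≤ 1 - b :=
    (pos_of_mul_pos_left (by linarith) (rpow_pos_of_pos ha (2 * b)).le).le
  refine concaveOn_of_hasDerivWithinAt2_nonpos
    (f' := fun z ↦ b * z ^ (b - 1) + -b * z ^ (-b - 1))
    (f'' := fun z ↦ b * ((b - 1) * z ^ (b - 1 - 1)) + -b * ((-b - 1) * z ^ (-b - 1 - 1)))
    (convex_Ici a) (fun x hx ↦ ?_) ?_ ?_ ?_
  · exact ((hderiv b hx).add (hderiv (-b) hx)).continuousAt.continuousWithinAt
  all_goals
    intro x hx
    replace hx : a ≤ x := interior_subset hx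
  · exact ((hderiv b hx).add (hderiv (-b) hx)).hasDerivWithinAt
  · exact (((hderiv (b - 1) hx).const_mul b).add
      ((hderiv (-b - 1) hx).const_mul (-b))).hasDerivWithinAt
  · have hx0 : 0 < x := ha.trans_le hx
    have factor : b * ((b - 1) * x ^ (b - 1 - 1)) + -b * ((-b - 1) * x ^ (-b - 1 - 1)) =
        b * x ^ (-b - 1 - 1) * (1 + b - (1 - b) * x ^ (2 * b)) := by
      rw [show b - 1 - 1 = 2 * b + (-b - 1 - 1) by ring, rpow_add hx0]
      ring
    have hpow : (1 - b) * a ^ (2 * b) ≤ (1 - b) * x ^ (2 * b) := by gcongr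
    rw [factor]
    exact mul_nonpos_of_nonneg_of_nonpos (by positivity) (by linarith)

lemma rpow_add_rpow_neg_eq_two_mul_cosh {z : ℝ} (hz : 0 < z) (b : ℝ) :
    z ^ b + z ^ (-b) = 2 * cosh (b * log z) := by
  rw [cosh_eq, rpow_def_of_pos hz, rpow_def_of_pos hz, mul_neg, mul_comm (log z)]
  ring

lemma two_mul_cosh_sub_two_le {y : ℝ} (hy : |y| ≤ log 3 / 2) :
    2 * cosh y - 2 ≤ y ^ 2 / log 2 := by
  have hlog2 : 0 < log 2 := log_pos one_lt_two
  have hy2 : y ^ 2 ≤ 1 / 2 := by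
    rw [← sq_abs]
    nlinarith [log_three_lt_d9, abs_nonneg y]
  have hexp : |exp (y ^ 2 / 2) - 1 - y ^ 2 / 2| ≤ (y ^ 2 / 2) ^ 2 :=
    abs_exp_sub_one_sub_id_le (by rw [abs_of_nonneg (by positivity)]; linarith)
  have hquad : 2 * cosh y - 2 ≤ 5 / 4 * y ^ 2 := by
    nlinarith [(abs_le.1 hexp).2, cosh_le_exp_half_sq y, sq_nonneg y]
  rw [le_div_iff₀ hlog2]
  nlinarith [log_two_lt_d9, sq_nonneg y]

lemma abs_le_log_two_mul_cosh_add_one (x : ℝ) : |x| ≤ log (2 * cosh x + 1) := by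
  rw [le_log_iff_exp_le (by positivity), ← cosh_abs, cosh_eq]
  linarith [exp_pos (-|x|)]

lemma exp_le_add_two_mul_cosh (y : ℝ) : exp y ≤ y - 1 + 2 * cosh y := by
  rw [cosh_eq]
  linarith [add_one_le_exp (-y)]

lemma exp_mul_le_rpow_add_rpow_neg {γ : ℝ} (hγ : 0 < γ) (t x : ℝ) :
    exp (t * x) ≤ t * x - 1 +
      ((2 * cosh (γ * x) + 1) ^ (|t| / γ) + (2 * cosh (γ * x) + 1) ^ (-(|t| / γ))) := by
  have hcosh : cosh (t * x) ≤ cosh (|t| / γ * log (2 * cosh (γ * x) + 1)) := by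
    rw [cosh_le_cosh]
    calc |t * x| = |t| / γ * |γ * x| := by
          rw [abs_mul, abs_mul, abs_of_pos hγ]
          field_simp
      _ ≤ |t| / γ * log (2 * cosh (γ * x) + 1) := by
          gcongr
          exact abs_le_log_two_mul_cosh_add_one _
      _ ≤ |(|t| / γ * log (2 * cosh (γ * x) + 1))| := le_abs_self _
  rw [rpow_add_rpow_neg_eq_two_mul_cosh (by positivity)]
  linarith [exp_le_add_two_mul_cosh (t * x)]

variable {Ω : Type*} [MeasurableSpace Ω] {μ : Measure Ω} {X : Ω → ℝ} {γ t : ℝ}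

lemma integrable_rpow_add_rpow_neg [IsFiniteMeasure μ] {b : ℝ} (hb : 0 ≤ b) (hb' : b ≤ 1)
    (hX : Integrable X μ) (hX1 : ∀ ω, 1 ≤ X ω) :
    Integrable (fun ω ↦ X ω ^ b + X ω ^ (-b)) μ := by
  have hmeas (c : ℝ) : AEStronglyMeasurable (fun ω ↦ X ω ^ c) μ :=
    (hX.aemeasurable.pow_const c).aestronglyMeasurable
  refine (hX.add (integrable_const 1)).mono' ((hmeas b).add (hmeas (-b))) (.of_forall fun ω ↦ ?_)
  have hX0 : 0 ≤ X ω := zero_le_one.trans (hX1 ω)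
  rw [norm_of_nonneg (by positivity)]
  exact add_le_add (rpow_le_self_of_one_le (hX1 ω) hb')
    (rpow_le_one_of_one_le_of_nonpos (hX1 ω) (neg_nonpos.2 hb))

/-- The two-sided moment `𝔼[exp (γ X)] + 𝔼[exp (-γ X)] + 1`, the argument of the logarithm in
`c_γ` when `X` is the log-likelihood ratio. -/
def twoSidedMgf (X : Ω → ℝ) (μ : Measure Ω) (γ : ℝ) : ℝ := mgf X μ γ + mgf X μ (-γ) + 1

/-- The counterpart of `c_γ` for a real random variable, with the natural logarithm. -/
def twoSidedCgf (X : Ω → ℝ) (μ : Measure Ω) (γ : ℝ) : ℝ := log (twoSidedMgf X μ γ) / γ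

lemma integrable_two_mul_cosh_add_one [IsFiniteMeasure μ]
    (hpos : Integrable (fun ω ↦ exp (γ * X ω)) μ) (hneg : Integrable (fun ω ↦ exp (-γ * X ω)) μ) :
    Integrable (fun ω ↦ 2 * cosh (γ * X ω) + 1) μ := by
  refine ((hpos.add hneg).add (integrable_const 1)).congr (.of_forall fun ω ↦ ?_)
  simp only [Pi.add_apply, cosh_eq, neg_mul]
  ring

variable [IsProbabilityMeasure μ]

lemma integral_two_mul_cosh_add_one
    (hpos : Integrable (fun ω ↦ exp (γ * X ω)) μ) (hneg : Integrable (fun ω ↦ exp (-γ * X ω)) μ) :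
    ∫ ω, (2 * cosh (γ * X ω) + 1) ∂μ = twoSidedMgf X μ γ := by
  calc ∫ ω, (2 * cosh (γ * X ω) + 1) ∂μ
      = ∫ ω, (exp (γ * X ω) + exp (-γ * X ω) + 1) ∂μ := by
        congr! 2 with ω
        rw [cosh_eq, neg_mul]
        ring
    _ = twoSidedMgf X μ γ := by
        rw [integral_add (hpos.fun_add hneg) (integrable_const 1), integral_add hpos hneg,
          integral_const, probReal_univ, one_smul]
        rfl

lemma three_le_twoSidedMgf
    (hpos : Integrable (fun ω ↦ exp (γ * X ω)) μ) (hneg : Integrable (fun ω ↦ exp (-γ * X ω)) μ) :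
    3 ≤ twoSidedMgf X μ γ := by
  rw [← integral_two_mul_cosh_add_one hpos hneg]
  calc (3 : ℝ) = ∫ _, 3 ∂μ := by simp
    _ ≤ ∫ ω, (2 * cosh (γ * X ω) + 1) ∂μ :=
        integral_mono (integrable_const 3) (integrable_two_mul_cosh_add_one hpos hneg)
          fun ω ↦ by linarith [one_le_cosh (γ * X ω)]

lemma twoSidedCgf_pos (hγ : 0 < γ)
    (hpos : Integrable (fun ω ↦ exp (γ * X ω)) μ) (hneg : Integrable (fun ω ↦ exp (-γ * X ω)) μ) :
    0 < twoSidedCgf X μ γ :=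
  div_pos (log_pos (by linarith [three_le_twoSidedMgf hpos hneg])) hγ

lemma integral_rpow_add_rpow_neg_le {b : ℝ} (hb : 0 ≤ b) (hb' : b ≤ 1 / 2)
    (hX : Integrable X μ) (hX3 : ∀ ω, 3 ≤ X ω) :
    ∫ ω, (X ω ^ b + X ω ^ (-b)) ∂μ ≤ μ[X] ^ b + μ[X] ^ (-b) := by
  have concave :=
    concaveOn_rpow_add_rpow_neg three_pos hb (one_add_le_one_sub_mul_three_rpow hb hb')
  have continuous : ContinuousOn (fun z : ℝ ↦ z ^ b + z ^ (-b)) (Set.Ici 3) := fun z hz ↦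
    have hz0 : z ≠ 0 := (three_pos.trans_le hz).ne'
    ((continuousAt_rpow_const z b (.inl hz0)).add
      (continuousAt_rpow_const z (-b) (.inl hz0))).continuousWithinAt
  exact concave.le_map_integral continuous isClosed_Ici (.of_forall hX3) hX
    (integrable_rpow_add_rpow_neg hb (by linarith) hX fun ω ↦ by linarith [hX3 ω])

lemma mgf_le_rpow_add_rpow_neg (hγ : 0 < γ) (htγ : |t| ≤ γ / 2)
    (hpos : Integrable (fun ω ↦ exp (γ * X ω)) μ) (hneg : Integrable (fun ω ↦ exp (-γ * X ω)) μ) :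
    mgf X μ t ≤ t * μ[X] - 1 +
      (twoSidedMgf X μ γ ^ (|t| / γ) + twoSidedMgf X μ γ ^ (-(|t| / γ))) := by
  set b := |t| / γ
  set Z : Ω → ℝ := fun ω ↦ 2 * cosh (γ * X ω) + 1
  have hb : 0 ≤ b := by positivity
  have hb' : b ≤ 1 / 2 := (div_le_iff₀ hγ).2 (by linarith)
  have hZ3 (ω : Ω) : 3 ≤ Z ω := by linarith [one_le_cosh (γ * X ω)]
  have hZ : Integrable Z μ := integrable_two_mul_cosh_add_one hpos hneg
  have hZb : Integrable (fun ω ↦ Z ω ^ b + Z ω ^ (-b)) μ :=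
    integrable_rpow_add_rpow_neg hb (by linarith) hZ fun ω ↦ by linarith [hZ3 ω]
  have hX : Integrable X μ := by
    simpa using integrable_pow_of_integrable_exp_mul hγ.ne' hpos hneg 1
  have hlin : Integrable (fun ω ↦ t * X ω - 1) μ := (hX.const_mul t).sub (integrable_const 1)
  have htX : Integrable (fun ω ↦ exp (t * X ω)) μ :=
    integrable_exp_mul_of_abs_le hpos hneg (by rw [abs_of_pos hγ]; linarith)
  calc mgf X μ t
      ≤ ∫ ω, (t * X ω - 1 + (Z ω ^ b + Z ω ^ (-b))) ∂μ :=
        integral_mono htX (hlin.add hZb) fun ω ↦ exp_mul_le_rpow_add_rpow_neg hγ t (X ω)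
    _ = t * μ[X] - 1 + ∫ ω, (Z ω ^ b + Z ω ^ (-b)) ∂μ := by
        rw [integral_add hlin hZb, integral_sub (hX.const_mul t) (integrable_const 1),
          integral_const_mul, integral_const, probReal_univ, one_smul]
    _ ≤ t * μ[X] - 1 + (μ[Z] ^ b + μ[Z] ^ (-b)) := by
        gcongr
        exact integral_rpow_add_rpow_neg_le hb hb' hZ hZ3
    _ = _ := by rw [integral_two_mul_cosh_add_one hpos hneg]

theorem cgf_le_mul_integral_add_sq_twoSidedCgf (hγ : 0 < γ)
    (hpos : Integrable (fun ω ↦ exp (γ * X ω)) μ) (hneg : Integrable (fun ω ↦ exp (-γ * X ω)) μ)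
    (ht : |t| * twoSidedCgf X μ γ ≤ log 3 / 2) :
    cgf X μ t ≤ t * μ[X] + (t * twoSidedCgf X μ γ) ^ 2 / log 2 := by
  have hZ := three_le_twoSidedMgf hpos hneg
  have hlog3 : 0 < log 3 := log_pos (by norm_num)
  have hlogZ : log 3 ≤ log (twoSidedMgf X μ γ) := log_le_log three_pos hZ
  have hscale : |t| / γ * log (twoSidedMgf X μ γ) = |t| * twoSidedCgf X μ γ := by
    rw [twoSidedCgf]
    ring
  have htγ : |t| ≤ γ / 2 := by
    have : |t| / γ ≤ 1 / 2 := by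
      by_contra! h
      nlinarith
    linarith [(div_le_iff₀ hγ).1 this]
  have htX : Integrable (fun ω ↦ exp (t * X ω)) μ :=
    integrable_exp_mul_of_abs_le hpos hneg (by rw [abs_of_pos hγ]; linarith)
  have hmgf := mgf_le_rpow_add_rpow_neg hγ htγ hpos hneg
  rw [rpow_add_rpow_neg_eq_two_mul_cosh (three_pos.trans_le hZ), hscale] at hmgf
  have hC := twoSidedCgf_pos hγ hpos hneg
  have hcosh := two_mul_cosh_sub_two_le (y := |t| * twoSidedCgf X μ γ)
    (by rwa [abs_of_nonneg (by positivity)])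
  rw [mul_pow, sq_abs, ← mul_pow] at hcosh
  calc cgf X μ t ≤ mgf X μ t - 1 := log_le_sub_one_of_pos (mgf_pos htX)
    _ ≤ t * μ[X] + (t * twoSidedCgf X μ γ) ^ 2 / log 2 := by linarith

end TwoSidedCgf
section FunctionalCalculus

open Matrix

variable {n : Type} [Fintype n] [DecidableEq n] {A B : Matrix n n ℂ}

lemma matFun_eq_cfc (hA : A.IsHermitian) (f : ℝ → ℝ) : matFun f A = cfc f A := by
  rw [hA.cfc_eq, matFun, dif_pos hA]
  rfl

lemma matFun_id (hA : A.IsHermitian) : matFun id A = A :=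
  (matFun_eq_cfc hA id).trans (cfc_id ℝ A hA.isSelfAdjoint)

lemma matFun_one (hA : A.IsHermitian) : matFun 1 A = 1 :=
  (matFun_eq_cfc hA 1).trans (cfc_one ℝ A hA.isSelfAdjoint)

lemma matFun_mul (hA : A.IsHermitian) (f g : ℝ → ℝ) :
    matFun f A * matFun g A = matFun (f * g) A := by
  simp_rw [matFun_eq_cfc hA]
  exact (cfc_mul f g A (finite_real_spectrum.continuousOn f)
    (finite_real_spectrum.continuousOn g)).symm

/-- The overlap `|⟨uᵢ, vⱼ⟩|²` of the eigenvectors of two Hermitian matrices. -/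
def eigenOverlap (hA : A.IsHermitian) (hB : B.IsHermitian) (i j : n) : ℝ :=
  ‖inner ℂ (hA.eigenvectorBasis i) (hB.eigenvectorBasis j)‖ ^ 2

lemma star_eigenvectorUnitary_mul_apply (hA : A.IsHermitian) (hB : B.IsHermitian) (i j : n) :
    (star (hA.eigenvectorUnitary : Matrix n n ℂ) * (hB.eigenvectorUnitary : Matrix n n ℂ)) i j =
      inner ℂ (hA.eigenvectorBasis i) (hB.eigenvectorBasis j) := by
  simp [Matrix.mul_apply, PiLp.inner_apply, mul_comm]

lemma rtr_matFun_mul_matFun (hA : A.IsHermitian) (hB : B.IsHermitian) (f g : ℝ → ℝ) :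
    rtr (matFun f A * matFun g B) =
      ∑ i, ∑ j, f (hA.eigenvalues i) * g (hB.eigenvalues j) * eigenOverlap hA hB i j := by
  set U := (hA.eigenvectorUnitary : Matrix n n ℂ)
  set V := (hB.eigenvectorUnitary : Matrix n n ℂ)
  set D := diagonal fun i ↦ (f (hA.eigenvalues i) : ℂ) with hD
  set E := diagonal fun j ↦ (g (hB.eigenvalues j) : ℂ) with hE
  have cyclic : (U * D * star U * (V * E * star V)).trace =
      (D * (star U * V) * (E * star (star U * V))).trace := by
    rw [star_mul, star_star, Matrix.mul_assoc U, Matrix.mul_assoc U, trace_mul_comm]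
    simp only [Matrix.mul_assoc]
  rw [matFun, matFun, dif_pos hA, dif_pos hB, rtr, cyclic, trace, Complex.re_sum]
  refine Finset.sum_congr rfl fun i _ ↦ ?_
  rw [diag_apply, Matrix.mul_apply, Complex.re_sum]
  refine Finset.sum_congr rfl fun j _ ↦ ?_
  have entry : (D * (star U * V)) i j * (E * star (star U * V)) j i =
      ((f (hA.eigenvalues i) * g (hB.eigenvalues j) * eigenOverlap hA hB i j : ℝ) : ℂ) := by
    rw [hD, hE, diagonal_mul, diagonal_mul, star_apply, star_eigenvectorUnitary_mul_apply,
      eigenOverlap, Complex.ofReal_mul, Complex.ofReal_mul, Complex.ofReal_pow,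
      ← Complex.mul_conj']
    simp only [Complex.star_def]
    ring
  rw [entry, Complex.ofReal_re]

lemma rtr_matFun (hA : A.IsHermitian) (hB : B.IsHermitian) (f : ℝ → ℝ) :
    rtr (matFun f A) = ∑ i, ∑ j, f (hA.eigenvalues i) * eigenOverlap hA hB i j := by
  simpa [matFun_one hB] using rtr_matFun_mul_matFun hA hB f 1

lemma eigenOverlap_eq_zero (hA : A.IsHermitian) (hB : B.IsHermitian) (hAB : SuppLE A B) {i j : n}
    (hi : hA.eigenvalues i ≠ 0) (hj : hB.eigenvalues j = 0) : eigenOverlap hA hB i j = 0 := by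
  set u := hA.eigenvectorBasis i
  set v := hB.eigenvectorBasis j
  have hu : toEuclideanLin A u = (hA.eigenvalues i : ℂ) • u := by
    ext k
    simpa using congrFun (hA.mulVec_eigenvectorBasis i) k
  have hv : toEuclideanLin A v = 0 := by
    ext k
    simpa using congrFun (hAB v (by rw [hB.mulVec_eigenvectorBasis, hj, zero_smul])) k
  have h : (hA.eigenvalues i : ℂ) * inner ℂ u v = 0 := by
    have := isSymmetric_toEuclideanLin_iff.2 hA u v
    rwa [hu, hv, inner_smul_left, inner_zero_right, Complex.conj_ofReal] at this
  have huv := (mul_eq_zero.1 h).resolve_left (Complex.ofReal_ne_zero.2 hi)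
  rw [eigenOverlap, huv, norm_zero, zero_pow two_ne_zero]

end FunctionalCalculus

section NussbaumSzkola

open Real MeasureTheory ProbabilityTheory

variable {n : Type} [Fintype n] [DecidableEq n] {ρ σ : Matrix n n ℂ}

/-- The law of the log-likelihood ratio of the Nussbaum–Szkoła distributions of `ρ` and `σ`: the
pair `(i, j)` has weight `λᵢ |⟨uᵢ, vⱼ⟩|²` and log-likelihood ratio `log λᵢ - log μⱼ`, where
`λᵢ, uᵢ` and `μⱼ, vⱼ` are the eigenvalues and eigenvectors of `ρ` and `σ`. Pairs with a zero
eigenvalue, where the ratio is a junk value, have weight zero when `SuppLE ρ σ`. -/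
def nussbaumSzkolaLaw (hρ : ρ.IsHermitian) (hσ : σ.IsHermitian) : Measure ℝ :=
  ∑ x : n × n, ENNReal.ofReal (hρ.eigenvalues x.1 * eigenOverlap hρ hσ x.1 x.2) •
    Measure.dirac (log (hρ.eigenvalues x.1) - log (hσ.eigenvalues x.2))

lemma integrable_nussbaumSzkolaLaw (hρ : ρ.IsHermitian) (hσ : σ.IsHermitian) (f : ℝ → ℝ) :
    Integrable f (nussbaumSzkolaLaw hρ hσ) :=
  integrable_finsetSum_measure.2 fun _ _ ↦
    (integrable_dirac enorm_lt_top).smul_measure ENNReal.ofReal_ne_top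

lemma integral_nussbaumSzkolaLaw (hρ : ρ.PosSemidef) (hσ : σ.IsHermitian) (f : ℝ → ℝ) :
    ∫ x, f x ∂nussbaumSzkolaLaw hρ.1 hσ =
      ∑ i, ∑ j, hρ.1.eigenvalues i * eigenOverlap hρ.1 hσ i j *
        f (log (hρ.1.eigenvalues i) - log (hσ.eigenvalues j)) := by
  rw [nussbaumSzkolaLaw, integral_finsetSum_measure
    fun _ _ ↦ (integrable_dirac enorm_lt_top).smul_measure ENNReal.ofReal_ne_top,
    Fintype.sum_prod_type]
  refine Finset.sum_congr rfl fun i _ ↦ Finset.sum_congr rfl fun j _ ↦ ?_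
  have hweight : 0 ≤ hρ.1.eigenvalues i * eigenOverlap hρ.1 hσ i j :=
    mul_nonneg (hρ.eigenvalues_nonneg i) (sq_nonneg _)
  rw [integral_smul_measure, integral_dirac, smul_eq_mul, ENNReal.toReal_ofReal hweight]

lemma isProbabilityMeasure_nussbaumSzkolaLaw (hρ : IsState ρ) (hσ : σ.IsHermitian) :
    IsProbabilityMeasure (nussbaumSzkolaLaw hρ.1.1 hσ) := by
  have : IsFiniteMeasure (nussbaumSzkolaLaw hρ.1.1 hσ) :=
    (integrable_const_iff_isFiniteMeasure one_ne_zero).1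
      (integrable_nussbaumSzkolaLaw hρ.1.1 hσ fun _ ↦ 1)
  have htrace : rtr (matFun id ρ) = 1 := by rw [matFun_id hρ.1.1, rtr, hρ.2, Complex.one_re]
  have hmass := integral_nussbaumSzkolaLaw hρ.1 hσ fun _ ↦ 1
  simp only [integral_const, smul_eq_mul, mul_one] at hmass
  rw [isProbabilityMeasure_iff_real, hmass, ← htrace, rtr_matFun hρ.1.1 hσ]
  rfl

lemma mgf_nussbaumSzkolaLaw (hρ : ρ.PosSemidef) (hσ : σ.PosSemidef) (h : SuppLE ρ σ) (s : ℝ) :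
    mgf id (nussbaumSzkolaLaw hρ.1 hσ.1) s = rtr (mpow ρ (1 + s) * mpow σ (-s)) := by
  rw [mgf, integral_nussbaumSzkolaLaw hρ hσ.1, mpow, mpow, rtr_matFun_mul_matFun hρ.1 hσ.1]
  refine Finset.sum_congr rfl fun i _ ↦ Finset.sum_congr rfl fun j _ ↦ ?_
  by_cases hi : hρ.1.eigenvalues i = 0
  · simp [hi]
  by_cases hj : hσ.1.eigenvalues j = 0
  · simp [eigenOverlap_eq_zero hρ.1 hσ.1 h hi hj]
  have hi0 := (hρ.eigenvalues_nonneg i).lt_of_ne' hi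
  have hj0 := (hσ.eigenvalues_nonneg j).lt_of_ne' hj
  rw [if_neg hi, if_neg hj, rpow_add hi0, rpow_one, rpow_def_of_pos hi0, rpow_def_of_pos hj0,
    id_def, mul_sub, sub_eq_add_neg, exp_add]
  ring_nf

lemma rtr_mul_mlog_sub_mlog (hρ : ρ.PosSemidef) (hσ : σ.IsHermitian) :
    rtr (ρ * (mlog ρ - mlog σ)) = (∫ x, x ∂nussbaumSzkolaLaw hρ.1 hσ) / log 2 := by
  have hlogρ : ρ * mlog ρ = matFun (id * logb 2) ρ := by
    rw [← matFun_mul hρ.1, matFun_id hρ.1, mlog]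
  have hlogσ : ρ * mlog σ = matFun id ρ * matFun (logb 2) σ := by rw [matFun_id hρ.1, mlog]
  have hsub : rtr (ρ * (mlog ρ - mlog σ)) = rtr (ρ * mlog ρ) - rtr (ρ * mlog σ) := by
    simp only [rtr, mul_sub, Matrix.trace_sub, Complex.sub_re]
  rw [hsub, hlogρ, hlogσ, rtr_matFun hρ.1 hσ, rtr_matFun_mul_matFun hρ.1 hσ,
    integral_nussbaumSzkolaLaw hρ hσ]
  simp only [Finset.sum_div, ← Finset.sum_sub_distrib]
  refine Finset.sum_congr rfl fun i _ ↦ Finset.sum_congr rfl fun j _ ↦ ?_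
  simp only [Pi.mul_apply, id_eq, logb]
  ring

end NussbaumSzkola

section Divergences

open Real MeasureTheory ProbabilityTheory

variable {n : Type} [Fintype n] [DecidableEq n] {ρ σ : Matrix n n ℂ}

lemma elog_of_pos {x : ℝ} (hx : 0 < x) : elog x = (logb 2 x : ℝ) :=
  if_neg hx.not_ge

lemma epow2_coe (x : ℝ) : epow2 x = ((2 : ℝ) ^ x : ℝ) := by
  rw [epow2, if_neg (EReal.coe_ne_top x), if_neg (EReal.coe_ne_bot x), EReal.toReal_coe]

lemma suppLE_of_relEntropy_lt_top (h : relEntropy ρ σ < ⊤) : SuppLE ρ σ := by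
  by_contra hsupp
  simp [relEntropy, hsupp] at h

lemma relEntropy_eq_integral (hρ : ρ.PosSemidef) (hσ : σ.IsHermitian) (h : SuppLE ρ σ) :
    relEntropy ρ σ = ((∫ x, x ∂nussbaumSzkolaLaw hρ.1 hσ) / log 2 : ℝ) := by
  rw [relEntropy, if_pos h, rtr_mul_mlog_sub_mlog hρ hσ]

lemma mgf_nussbaumSzkolaLaw_pos (hρ : IsState ρ) (hσ : σ.IsHermitian) (s : ℝ) :
    0 < mgf id (nussbaumSzkolaLaw hρ.1.1 hσ) s :=
  have := isProbabilityMeasure_nussbaumSzkolaLaw hρ hσ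
  mgf_pos (integrable_nussbaumSzkolaLaw hρ.1.1 hσ _)

lemma petzRenyi_one_add_eq_cgf (hρ : IsState ρ) (hσ : σ.PosSemidef) (h : SuppLE ρ σ) (s : ℝ) :
    petzRenyi (1 + s) ρ σ = (s⁻¹ * (cgf id (nussbaumSzkolaLaw hρ.1.1 hσ.1) s / log 2) : ℝ) := by
  rw [petzRenyi, if_neg fun h' ↦ h'.2 h, sub_add_cancel_left, add_sub_cancel_left,
    ← mgf_nussbaumSzkolaLaw hρ.1 hσ h, elog_of_pos (mgf_nussbaumSzkolaLaw_pos hρ hσ.1 s),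
    EReal.coe_mul]
  rfl

lemma epow2_mul_petzRenyi_one_add (hρ : IsState ρ) (hσ : σ.PosSemidef) (h : SuppLE ρ σ) {s : ℝ}
    (hs : s ≠ 0) :
    epow2 (s * petzRenyi (1 + s) ρ σ) = (mgf id (nussbaumSzkolaLaw hρ.1.1 hσ.1) s : ℝ) := by
  rw [petzRenyi_one_add_eq_cgf hρ hσ h, ← EReal.coe_mul, mul_inv_cancel_left₀ hs, epow2_coe, cgf]
  exact congrArg _ (rpow_logb two_pos (by norm_num) (mgf_nussbaumSzkolaLaw_pos hρ hσ.1 s))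

lemma cGamma_eq_twoSidedCgf (hρ : IsState ρ) (hσ : σ.PosSemidef) (h : SuppLE ρ σ) {γ : ℝ}
    (hγ : γ ≠ 0) :
    cGamma γ ρ σ = (twoSidedCgf id (nussbaumSzkolaLaw hρ.1.1 hσ.1) γ / log 2 : ℝ) := by
  have hmgf := mgf_nussbaumSzkolaLaw_pos hρ hσ.1
  have hpos : 0 < twoSidedMgf id (nussbaumSzkolaLaw hρ.1.1 hσ.1) γ :=
    add_pos (add_pos (hmgf γ) (hmgf (-γ))) one_pos
  rw [cGamma, sub_eq_add_neg 1 γ, epow2_mul_petzRenyi_one_add hρ hσ h hγ,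
    epow2_mul_petzRenyi_one_add hρ hσ h (neg_ne_zero.2 hγ), ← EReal.coe_add, ← EReal.coe_one,
    ← EReal.coe_add, ← twoSidedMgf, elogE, if_neg (EReal.coe_ne_top _), EReal.toReal_coe,
    elog_of_pos hpos, ← EReal.coe_mul, twoSidedCgf, logb]
  congr 1
  ring

theorem petzRenyi_continuity_lower_general (hρ : IsState ρ) (hσ : σ.PosSemidef) {γ δ : ℝ}
    (hγ : 0 < γ) (hD : relEntropy ρ σ < ⊤) (hδ : 0 < δ)
    (hδγ : δ ≤ logb 2 3 / (2 * (cGamma γ ρ σ).toReal)) :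
    relEntropy ρ σ - (δ * (cGamma γ ρ σ).toReal ^ 2 : ℝ) ≤ petzRenyi (1 - δ) ρ σ := by
  have h := suppLE_of_relEntropy_lt_top hD
  set P := nussbaumSzkolaLaw hρ.1.1 hσ.1
  have := isProbabilityMeasure_nussbaumSzkolaLaw hρ hσ.1
  have integrable := integrable_nussbaumSzkolaLaw hρ.1.1 hσ.1
  set C := twoSidedCgf id P γ
  have hC : 0 < C := twoSidedCgf_pos hγ (integrable _) (integrable _)
  have hlog2 : 0 < log 2 := log_pos one_lt_two
  have hcGamma : cGamma γ ρ σ = (C / log 2 : ℝ) := cGamma_eq_twoSidedCgf hρ hσ h hγ.ne'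
  rw [hcGamma, EReal.toReal_coe, logb, le_div_iff₀ (by positivity)] at hδγ
  have hsmall : |-δ| * C ≤ log 3 / 2 := by
    rw [abs_neg, abs_of_pos hδ]
    field_simp at hδγ
    linarith
  have hcgf : cgf id P (-δ) ≤ -δ * ∫ x, x ∂P + (-δ * C) ^ 2 / log 2 :=
    cgf_le_mul_integral_add_sq_twoSidedCgf hγ (integrable _) (integrable _) hsmall
  rw [hcGamma, EReal.toReal_coe, relEntropy_eq_integral hρ.1 hσ.1 h, sub_eq_add_neg 1 δ,
    petzRenyi_one_add_eq_cgf hρ hσ h, ← EReal.coe_sub, EReal.coe_le_coe_iff]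
  calc (∫ x, x ∂P) / log 2 - δ * (C / log 2) ^ 2
      = (-δ)⁻¹ * ((-δ * ∫ x, x ∂P + (-δ * C) ^ 2 / log 2) / log 2) := by
        field_simp
        ring
    _ ≤ (-δ)⁻¹ * (cgf id P (-δ) / log 2) :=
        mul_le_mul_of_nonpos_left (by gcongr) (inv_nonpos.2 (neg_nonpos.2 hδ.le))

end Divergences

/-- Continuity of the Petz–Rényi divergence in α (lower bound). -/
theorem petzRenyi_continuity_lower {d : ℕ} (ρ σ : Matrix (Fin d) (Fin d) ℂ)
    (hρ : IsState ρ) (hσ : IsState σ) (γ : ℝ) (hγ : 0 < γ ∧ γ ≤ 1)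
    (hD : relEntropy ρ σ < ⊤) (hc : cGamma γ ρ σ < ⊤)
    (δ : ℝ) (hδ : 0 < δ ∧ δ ≤ Real.logb 2 3 / (2 * (cGamma γ ρ σ).toReal)) :
    relEntropy ρ σ - ((δ * (cGamma γ ρ σ).toReal ^ 2 : ℝ) : EReal) ≤
      petzRenyi (1 - δ) ρ σ :=
  petzRenyi_continuity_lower_general hρ hσ.1 hγ.1 hD hδ.1 hδ.2

end QCD
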